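/- Let A be an n×n real positive-semidefinite matrix, let 1 ≤ r < k ≤ n, and let Ω be an n×k random matrix with independent standard normal entries. Define the Nyström approximation Â = AΩ((Ω*AΩ)†)Ω*A and let Â_r = ⟦Â⟧_r. Then E‖A − Â_r‖_∞ ≤ ‖A − ⟦A⟧_r‖_∞ + 2·min over natural numbers ϱ with ϱ < k − 1 of [(1 + ϱ/(k − ϱ − 1)) · ‖A − ⟦A⟧_ϱ‖₁]. -/

import Mathlib

open Matrix MeasureTheory ProbabilityTheory
open scoped ENNReal NNReal ComplexOrder Classical

namespace PsdSketch

variable {𝕜 : Type*} [RCLike 𝕜]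

/-- The four Penrose conditions characterizing the Moore–Penrose pseudoinverse. -/
def IsMoorePenrose {m k : ℕ} (M : Matrix (Fin m) (Fin k) 𝕜)
    (X : Matrix (Fin k) (Fin m) 𝕜) : Prop :=
  M * X * M = M ∧ X * M * X = X ∧ (M * X)ᴴ = M * X ∧ (X * M)ᴴ = X * M

/-- The Moore–Penrose pseudoinverse `M†` (the unique matrix satisfying the
Penrose conditions). -/
noncomputable def pinv {m k : ℕ} (M : Matrix (Fin m) (Fin k) 𝕜) :
    Matrix (Fin k) (Fin m) 𝕜 :=
  if h : ∃ X, IsMoorePenrose M X then h.choose else 0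

/-- The Nyström approximation `Â = A Ω ((Ω* A Ω)†) Ω* A`. -/
noncomputable def nystrom {n k : ℕ} (A : Matrix (Fin n) (Fin n) 𝕜)
    (Ω : Matrix (Fin n) (Fin k) 𝕜) : Matrix (Fin n) (Fin n) 𝕜 :=
  A * Ω * pinv (Ωᴴ * A * Ω) * Ωᴴ * A

/-- The `i`-th singular value of a square matrix, 0-indexed and listed in weakly
decreasing order (so `sval M 0 = σ₁(M)`), with `sval M i = 0` for `i ≥ n`. -/
noncomputable def sval {n : ℕ} (M : Matrix (Fin n) (Fin n) 𝕜) (i : ℕ) : ℝ :=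
  if h : i < n then
    Real.sqrt
      ((Matrix.posSemidef_conjTranspose_mul_self M).1.eigenvalues
        (Tuple.sort (Matrix.posSemidef_conjTranspose_mul_self M).1.eigenvalues
          (Fin.rev ⟨i, h⟩)))
  else 0

/-- The Schatten `p`-norm: the `ℓ_p` norm of the vector of singular values. -/
noncomputable def schatten {n : ℕ} (p : ℝ≥0∞) (M : Matrix (Fin n) (Fin n) 𝕜) : ℝ :=
  if p = ∞ then sval M 0
  else (∑ i ∈ Finset.range n, sval M i ^ p.toReal) ^ (1 / p.toReal)

/-- `σ_{r+1}^{(p)}(M)`, the optimal rank-`r` approximation error of `M` in the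
Schatten `p`-norm: `(Σ_{i > r} σ_i(M)^p)^{1/p}` (for `p = ∞`, `σ_{r+1}(M)`). -/
noncomputable def tailNorm {n : ℕ} (p : ℝ≥0∞) (M : Matrix (Fin n) (Fin n) 𝕜)
    (r : ℕ) : ℝ :=
  if p = ∞ then sval M r
  else (∑ i ∈ Finset.Ico r n, sval M i ^ p.toReal) ^ (1 / p.toReal)

/-- `B` is a (simultaneous) best rank-`r` approximation of `M` with respect to every
Schatten `p`-norm; this is the defining property of an `r`-truncated SVD `⟦M⟧_r`. -/
def IsBestRankApprox {n : ℕ} (M B : Matrix (Fin n) (Fin n) 𝕜) (r : ℕ) : Prop :=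
  B.rank ≤ r ∧
    ∀ p : ℝ≥0∞, 1 ≤ p → ∀ C : Matrix (Fin n) (Fin n) 𝕜, C.rank ≤ r →
      schatten p (M - B) ≤ schatten p (M - C)

/-- `⟦M⟧_r`: a best rank-`r` approximation of `M` (an `r`-truncated SVD). -/
noncomputable def truncate {n : ℕ} (M : Matrix (Fin n) (Fin n) 𝕜) (r : ℕ) :
    Matrix (Fin n) (Fin n) 𝕜 :=
  if h : ∃ B, IsBestRankApprox M B r then h.choose else 0

/-- The distribution of an `n × k` random matrix with independent standard normal
entries (matrices identified with functions `Fin n → Fin k → ℝ`). -/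
noncomputable def gaussianEnsemble (n k : ℕ) : Measure (Fin n → Fin k → ℝ) :=
  Measure.pi fun _ => Measure.pi fun _ => gaussianReal 0 1

/-
The error `A - Â` is dominated by `(1 - Ω X)ᴴ A (1 - Ω X)` for every matrix `X`, because `Â` comes
from the orthogonal projection of a square root `B` of `A` onto the range of `B Ω`. By rotation
invariance of `Ω` one may take `A` diagonal with decreasing entries; choosing for `X` the dual
family of the first `ϱ` rows of `Ω` kills those rows of `1 - Ω X`. Taking traces, the expected error
is then at most `‖A - ⟦A⟧_ϱ‖₁` times `1 + ∑ E ‖c i‖²`, where the norm of the dual vector `c i` is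
the reciprocal of the distance from the `i`-th row to the span of the other `ϱ - 1`. That distance
is the norm of a standard Gaussian vector in dimension at least `k - ϱ + 1`, whose inverse square
has expectation at most `1 / (k - ϱ - 1)`. Finally, truncating `Â` instead of `A` costs at most
twice `‖A - Â‖`.
-/

section SingularValues

open Module
open scoped InnerProductSpace Matrix.Norms.L2Operator

lemma finrank_le_finrank_orthogonal_span_add_card {ι E : Type*} [NormedAddCommGroup E]
    [InnerProductSpace 𝕜 E] [FiniteDimensional 𝕜 E] (v : ι → E) (s : Finset ι) :
    finrank 𝕜 E ≤ finrank 𝕜 (Submodule.span 𝕜 (v '' s))ᗮ + s.card := by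
  have hspan : finrank 𝕜 (Submodule.span 𝕜 (v '' s)) ≤ s.card := by
    rw [← Finset.coe_image]
    exact (finrank_span_finset_le_card _).trans Finset.card_image_le
  have := (Submodule.span 𝕜 (v '' s)).finrank_add_finrank_orthogonal
  omega

lemma finrank_add_finrank_le_finrank_add_finrank_inf {K E : Type*} [DivisionRing K]
    [AddCommGroup E] [Module K E] [FiniteDimensional K E] (S T : Submodule K E) :
    finrank K S + finrank K T ≤ finrank K E + finrank K ↥(S ⊓ T) := by
  have := Submodule.finrank_sup_add_finrank_inf_eq S T
  have := (S ⊔ T).finrank_le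
  omega

lemma mem_orthogonal_span_image_iff {ι E : Type*} [NormedAddCommGroup E]
    [InnerProductSpace 𝕜 E] (v : ι → E) (s : Set ι) (x : E) :
    x ∈ (Submodule.span 𝕜 (v '' s))ᗮ ↔ ∀ j ∈ s, ⟪v j, x⟫_𝕜 = 0 := by
  rw [← Submodule.span_singleton_le_iff_mem, ← Submodule.isOrtho_iff_le, Submodule.isOrtho_comm,
    Submodule.isOrtho_span]
  simp

variable {n : ℕ}

lemma sval_nonneg (M : Matrix (Fin n) (Fin n) 𝕜) (i : ℕ) : 0 ≤ sval M i := by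
  unfold sval
  split_ifs
  exacts [Real.sqrt_nonneg _, le_rfl]

lemma sval_antitone (M : Matrix (Fin n) (Fin n) 𝕜) : Antitone (sval M) := by
  intro i j hij
  by_cases hj : j < n
  · have hi : i < n := hij.trans_lt hj
    simp only [sval, hi, hj, dif_pos]
    have hsort := Tuple.monotone_sort (posSemidef_conjTranspose_mul_self M).1.eigenvalues
    exact Real.sqrt_le_sqrt (hsort (Fin.rev_le_rev.mpr (Fin.mk_le_mk.mpr hij)))
  · simpa only [sval, hj, dif_neg, not_false_iff] using sval_nonneg M i

/-- An orthonormal basis of right singular vectors of `M`, listed so that the `j`-th vector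
belongs to `sval M j`. -/
noncomputable def rightSingularBasis (M : Matrix (Fin n) (Fin n) 𝕜) :
    OrthonormalBasis (Fin n) 𝕜 (EuclideanSpace 𝕜 (Fin n)) :=
  (posSemidef_conjTranspose_mul_self M).1.eigenvectorBasis.reindex
    (Fin.revPerm.trans (Tuple.sort (posSemidef_conjTranspose_mul_self M).1.eigenvalues)).symm

lemma toEuclideanCLM_conjTranspose_mul_self_rightSingularBasis (M : Matrix (Fin n) (Fin n) 𝕜)
    (j : Fin n) :
    toEuclideanCLM (𝕜 := 𝕜) (Mᴴ * M) (rightSingularBasis M j) =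
      ((sval M j ^ 2 : ℝ) : 𝕜) • rightSingularBasis M j := by
  have hpsd := posSemidef_conjTranspose_mul_self M
  have hsq : sval M j ^ 2 = hpsd.1.eigenvalues (Tuple.sort hpsd.1.eigenvalues (Fin.rev j)) := by
    simp only [sval, j.isLt, dif_pos, Fin.eta]
    exact Real.sq_sqrt (hpsd.eigenvalues_nonneg _)
  apply WithLp.ofLp_injective
  simp only [rightSingularBasis, ofLp_toEuclideanCLM, OrthonormalBasis.reindex_apply,
    Equiv.symm_symm, Equiv.trans_apply, Fin.revPerm_apply, hsq, hpsd.1.mulVec_eigenvectorBasis]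
  rw [WithLp.ofLp_smul, RCLike.real_smul_eq_coe_smul (K := 𝕜)]

lemma norm_sq_toEuclideanCLM (M : Matrix (Fin n) (Fin n) 𝕜) (x : EuclideanSpace 𝕜 (Fin n)) :
    ‖toEuclideanCLM (𝕜 := 𝕜) M x‖ ^ 2 =
      ∑ j : Fin n, sval M j ^ 2 * ‖⟪rightSingularBasis M j, x⟫_𝕜‖ ^ 2 := by
  set b := rightSingularBasis M
  have hadj (y z : EuclideanSpace 𝕜 (Fin n)) :
      ⟪y, toEuclideanCLM (𝕜 := 𝕜) (Mᴴ * M) z⟫_𝕜 =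
        ⟪toEuclideanCLM (𝕜 := 𝕜) M y, toEuclideanCLM (𝕜 := 𝕜) M z⟫_𝕜 := by
    rw [map_mul, ← star_eq_conjTranspose, map_star, ContinuousLinearMap.star_eq_adjoint,
      mul_apply_eq_comp, ContinuousLinearMap.adjoint_inner_right]
  have hcoeff (j : Fin n) : ⟪toEuclideanCLM (𝕜 := 𝕜) M (b j), toEuclideanCLM (𝕜 := 𝕜) M x⟫_𝕜 =
      ((sval M j ^ 2 : ℝ) : 𝕜) * ⟪b j, x⟫_𝕜 := by
    rw [← inner_conj_symm, ← hadj, toEuclideanCLM_conjTranspose_mul_self_rightSingularBasis,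
      inner_smul_right, map_mul, RCLike.conj_ofReal, inner_conj_symm]
  rw [← RCLike.ofReal_inj (K := 𝕜), RCLike.ofReal_pow, ← inner_self_eq_norm_sq_to_K, ← hadj,
    ← b.sum_inner_mul_inner]
  push_cast
  refine Finset.sum_congr rfl fun j _ => ?_
  rw [hadj, hcoeff, ← inner_conj_symm, mul_left_comm, RCLike.conj_mul]
  push_cast
  rfl

lemma norm_toEuclideanCLM_le_sval_mul (M : Matrix (Fin n) (Fin n) 𝕜) {i : ℕ}
    {x : EuclideanSpace 𝕜 (Fin n)}
    (hx : ∀ j : Fin n, (j : ℕ) < i → ⟪rightSingularBasis M j, x⟫_𝕜 = 0) :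
    ‖toEuclideanCLM (𝕜 := 𝕜) M x‖ ≤ sval M i * ‖x‖ := by
  refine le_of_sq_le_sq ?_ (by have := sval_nonneg M i; positivity)
  rw [norm_sq_toEuclideanCLM, mul_pow, ← (rightSingularBasis M).sum_sq_norm_inner_right x,
    Finset.mul_sum]
  refine Finset.sum_le_sum fun j _ => ?_
  rcases lt_or_ge (j : ℕ) i with hj | hj
  · simp [hx j hj]
  · gcongr
    exacts [sval_nonneg M j, sval_antitone M hj]

lemma sval_mul_norm_le_norm_toEuclideanCLM (M : Matrix (Fin n) (Fin n) 𝕜) {i : ℕ}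
    {x : EuclideanSpace 𝕜 (Fin n)}
    (hx : ∀ j : Fin n, i < (j : ℕ) → ⟪rightSingularBasis M j, x⟫_𝕜 = 0) :
    sval M i * ‖x‖ ≤ ‖toEuclideanCLM (𝕜 := 𝕜) M x‖ := by
  refine le_of_sq_le_sq ?_ (norm_nonneg _)
  rw [norm_sq_toEuclideanCLM, mul_pow, ← (rightSingularBasis M).sum_sq_norm_inner_right x,
    Finset.mul_sum]
  refine Finset.sum_le_sum fun j _ => ?_
  rcases lt_or_ge i (j : ℕ) with hj | hj
  · simp [hx j hj]
  · gcongr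
    exacts [sval_nonneg M i, sval_antitone M hj]

lemma sval_le_of_norm_toEuclideanCLM_le (M : Matrix (Fin n) (Fin n) 𝕜) {i : ℕ} {c : ℝ}
    (hc : 0 ≤ c) (S : Submodule 𝕜 (EuclideanSpace 𝕜 (Fin n))) (hS : n ≤ finrank 𝕜 S + i)
    (hM : ∀ x ∈ S, ‖toEuclideanCLM (𝕜 := 𝕜) M x‖ ≤ c * ‖x‖) : sval M i ≤ c := by
  rcases lt_or_ge i n with hi | hi
  · set T := (Submodule.span 𝕜 (rightSingularBasis M '' (Finset.Ioi (⟨i, hi⟩ : Fin n))))ᗮ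
    have hTrank : n ≤ finrank 𝕜 T + (n - 1 - i) := by
      simpa using finrank_le_finrank_orthogonal_span_add_card (𝕜 := 𝕜) (rightSingularBasis M)
        (Finset.Ioi ⟨i, hi⟩)
    have hinf := finrank_add_finrank_le_finrank_add_finrank_inf S T
    rw [finrank_euclideanSpace_fin] at hinf
    obtain ⟨x, hx, hx0⟩ := Submodule.exists_mem_ne_zero_of_ne_bot
      (Submodule.one_le_finrank_iff.mp (by omega : 1 ≤ finrank 𝕜 ↥(S ⊓ T)))
    have hlow := sval_mul_norm_le_norm_toEuclideanCLM M (i := i) fun j hj =>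
      (mem_orthogonal_span_image_iff _ _ x).mp hx.2 j (by simpa [Fin.lt_def] using hj)
    exact le_of_mul_le_mul_right (hlow.trans (hM x hx.1)) (norm_pos_iff.mpr hx0)
  · simpa only [sval, hi.not_gt, dif_neg, not_false_iff] using hc

lemma schatten_nonneg (p : ℝ≥0∞) (M : Matrix (Fin n) (Fin n) 𝕜) : 0 ≤ schatten p M := by
  unfold schatten
  split_ifs
  · exact sval_nonneg M 0
  · exact Real.rpow_nonneg (Finset.sum_nonneg fun i _ => Real.rpow_nonneg (sval_nonneg M i) _) _

lemma sval_zero_eq_norm (M : Matrix (Fin n) (Fin n) 𝕜) : sval M 0 = ‖M‖ := by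
  apply le_antisymm
  · refine sval_le_of_norm_toEuclideanCLM_le M (norm_nonneg M) ⊤ (by simp) fun x _ => ?_
    exact (toEuclideanCLM (𝕜 := 𝕜) M).le_opNorm x
  · refine ContinuousLinearMap.opNorm_le_bound _ (sval_nonneg M 0) fun x => ?_
    exact norm_toEuclideanCLM_le_sval_mul M fun j hj => absurd hj (Nat.not_lt_zero _)

lemma schatten_top (M : Matrix (Fin n) (Fin n) 𝕜) : schatten ⊤ M = ‖M‖ := by
  rw [schatten, if_pos rfl, sval_zero_eq_norm]

lemma rank_add_finrank_ker_toEuclideanLin (C : Matrix (Fin n) (Fin n) 𝕜) :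
    C.rank + finrank 𝕜 (LinearMap.ker (toEuclideanLin C)) = n := by
  rw [rank_eq_finrank_range_toLin C (PiLp.basisFun 2 𝕜 (Fin n)) (PiLp.basisFun 2 𝕜 (Fin n)),
    ← toLpLin_eq_toLin, LinearMap.finrank_range_add_finrank_ker, finrank_euclideanSpace_fin]

lemma card_filter_val_mem_le (s : Finset ℕ) :
    (Finset.univ.filter fun j : Fin n => (j : ℕ) ∈ s).card ≤ s.card :=
  Finset.card_le_card_of_injOn Fin.val (fun _ hj => (Finset.mem_filter.mp hj).2)
    Fin.val_injective.injOn

lemma le_finrank_orthogonal_span_image_val_preimage_add_card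
    (b : Fin n → EuclideanSpace 𝕜 (Fin n)) (s : Finset ℕ) :
    n ≤ finrank 𝕜 (Submodule.span 𝕜 (b '' (Fin.val ⁻¹' s)))ᗮ + s.card := by
  have hcodim := finrank_le_finrank_orthogonal_span_add_card (𝕜 := 𝕜) b
    (Finset.univ.filter fun j : Fin n => (j : ℕ) ∈ s)
  rw [finrank_euclideanSpace_fin, Finset.coe_filter_univ] at hcodim
  exact hcodim.trans (Nat.add_le_add_left (card_filter_val_mem_le s) _)

lemma sval_add_le_sval_sub_of_rank_le (M : Matrix (Fin n) (Fin n) 𝕜)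
    {C : Matrix (Fin n) (Fin n) 𝕜} {r : ℕ} (hC : C.rank ≤ r) (i : ℕ) :
    sval M (r + i) ≤ sval (M - C) i := by
  set b := rightSingularBasis (M - C)
  set K := LinearMap.ker (toEuclideanLin C)
  set S := (Submodule.span 𝕜 (b '' (Fin.val ⁻¹' (Finset.range i))))ᗮ
  have hK : C.rank + finrank 𝕜 K = n := rank_add_finrank_ker_toEuclideanLin C
  have hS : n ≤ finrank 𝕜 S + (Finset.range i).card :=
    le_finrank_orthogonal_span_image_val_preimage_add_card b _
  have hinf := finrank_add_finrank_le_finrank_add_finrank_inf K S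
  rw [Finset.card_range] at hS
  rw [finrank_euclideanSpace_fin] at hinf
  refine sval_le_of_norm_toEuclideanCLM_le M (sval_nonneg _ i) (K ⊓ S) (by omega) fun x hx => ?_
  have hCx : toEuclideanCLM (𝕜 := 𝕜) C x = 0 := hx.1
  have hbound := norm_toEuclideanCLM_le_sval_mul (M - C) (i := i) (x := x) fun j hj =>
    (mem_orthogonal_span_image_iff _ _ x).mp hx.2 j (by simpa using hj)
  simpa only [map_sub, _root_.sub_apply, hCx, sub_zero] using hbound

lemma rank_toEuclideanCLM_symm_starProjection (U : Submodule 𝕜 (EuclideanSpace 𝕜 (Fin n))) :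
    ((toEuclideanCLM (𝕜 := 𝕜)).symm U.starProjection).rank = finrank 𝕜 U := by
  have hker : LinearMap.ker (toEuclideanLin ((toEuclideanCLM (𝕜 := 𝕜)).symm U.starProjection)) =
      Uᗮ := by
    rw [← coe_toEuclideanCLM_eq_toEuclideanLin, StarAlgEquiv.apply_symm_apply,
      U.ker_starProjection]
  have hrank := rank_add_finrank_ker_toEuclideanLin
    ((toEuclideanCLM (𝕜 := 𝕜)).symm U.starProjection)
  have := U.finrank_add_finrank_orthogonal
  rw [finrank_euclideanSpace_fin] at this
  rw [hker] at hrank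
  omega

lemma exists_rank_le_forall_sval_sub_le (M : Matrix (Fin n) (Fin n) 𝕜) (r : ℕ) :
    ∃ B : Matrix (Fin n) (Fin n) 𝕜, B.rank ≤ r ∧ ∀ i, sval (M - B) i ≤ sval M (r + i) := by
  set b := rightSingularBasis M
  set U := Submodule.span 𝕜 (b '' (Fin.val ⁻¹' (Finset.range r)))
  set P := (toEuclideanCLM (𝕜 := 𝕜)).symm U.starProjection
  refine ⟨M * P, ?_, fun i => ?_⟩
  · have hU : n ≤ finrank 𝕜 Uᗮ + (Finset.range r).card :=
      le_finrank_orthogonal_span_image_val_preimage_add_card b _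
    have hsum := U.finrank_add_finrank_orthogonal
    rw [Finset.card_range] at hU
    rw [finrank_euclideanSpace_fin] at hsum
    have hP : P.rank = finrank 𝕜 U := rank_toEuclideanCLM_symm_starProjection U
    exact (rank_mul_le_right M P).trans (by omega)
  · set S := (Submodule.span 𝕜 (b '' (Fin.val ⁻¹' (Finset.Ico r (r + i)))))ᗮ
    have hS : n ≤ finrank 𝕜 S + (Finset.Ico r (r + i)).card :=
      le_finrank_orthogonal_span_image_val_preimage_add_card b _
    rw [Nat.card_Ico, Nat.add_sub_cancel_left] at hS
    refine sval_le_of_norm_toEuclideanCLM_le _ (sval_nonneg _ _) S hS fun x hx => ?_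
    have hMP : toEuclideanCLM (𝕜 := 𝕜) (M - M * P) x =
        toEuclideanCLM (𝕜 := 𝕜) M (Uᗮ.starProjection x) := by
      simp [P, U.starProjection_orthogonal']
    have horth (j : Fin n) (hj : (j : ℕ) < r + i) : ⟪b j, Uᗮ.starProjection x⟫_𝕜 = 0 := by
      rcases lt_or_ge (j : ℕ) r with hjr | hjr
      · have hbj : b j ∈ U := Submodule.subset_span ⟨j, by simpa using hjr, rfl⟩
        exact Submodule.inner_right_of_mem_orthogonal hbj (Uᗮ.starProjection_apply_mem x)
      · have hbj : b j ∈ Uᗮ := (mem_orthogonal_span_image_iff _ _ _).mpr fun l hl =>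
          b.orthonormal.2 <| by
            rintro rfl
            simp only [Finset.coe_range, Set.mem_preimage, Set.mem_Iio] at hl
            omega
        rw [← Submodule.inner_starProjection_left_eq_right,
          Submodule.starProjection_eq_self_iff.mpr hbj]
        exact (mem_orthogonal_span_image_iff _ _ _).mp hx j <| by
          simp only [Finset.coe_Ico, Set.mem_preimage, Set.mem_Ico]
          omega
    rw [hMP]
    exact (norm_toEuclideanCLM_le_sval_mul M horth).trans
      (mul_le_mul_of_nonneg_left (Submodule.norm_starProjection_apply_le _ _) (sval_nonneg _ _))

lemma schatten_mono {p : ℝ≥0∞} {M N : Matrix (Fin n) (Fin n) 𝕜}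
    (h : ∀ i, sval M i ≤ sval N i) : schatten p M ≤ schatten p N := by
  unfold schatten
  split_ifs
  · exact h 0
  · have hnn := sval_nonneg M
    gcongr with i
    · exact Finset.sum_nonneg fun i _ => Real.rpow_nonneg (hnn i) _
    · exact hnn i
    · exact h i

lemma exists_isBestRankApprox (M : Matrix (Fin n) (Fin n) 𝕜) (r : ℕ) :
    ∃ B, IsBestRankApprox M B r := by
  obtain ⟨B, hrank, hB⟩ := exists_rank_le_forall_sval_sub_le M r
  exact ⟨B, hrank, fun p _ C hC =>
    schatten_mono fun i => (hB i).trans (sval_add_le_sval_sub_of_rank_le M hC i)⟩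

lemma isBestRankApprox_truncate (M : Matrix (Fin n) (Fin n) 𝕜) (r : ℕ) :
    IsBestRankApprox M (truncate M r) r := by
  rw [truncate, dif_pos (exists_isBestRankApprox M r)]
  exact (exists_isBestRankApprox M r).choose_spec

lemma norm_sub_truncate_le (M : Matrix (Fin n) (Fin n) 𝕜) {C : Matrix (Fin n) (Fin n) 𝕜} {r : ℕ}
    (hC : C.rank ≤ r) : ‖M - truncate M r‖ ≤ ‖M - C‖ := by
  simpa only [schatten_top] using (isBestRankApprox_truncate M r).2 ⊤ le_top C hC

lemma norm_sub_truncate_le_norm_sub_truncate_add (M N : Matrix (Fin n) (Fin n) 𝕜) (r : ℕ) :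
    ‖M - truncate N r‖ ≤ ‖M - truncate M r‖ + 2 * ‖M - N‖ := by
  calc ‖M - truncate N r‖ ≤ ‖M - N‖ + ‖N - truncate N r‖ := norm_sub_le_norm_sub_add_norm_sub _ _ _
    _ ≤ ‖M - N‖ + ‖N - truncate M r‖ :=
        add_le_add_right (norm_sub_truncate_le N (isBestRankApprox_truncate M r).1) _
    _ ≤ ‖M - N‖ + (‖N - M‖ + ‖M - truncate M r‖) :=
        add_le_add_right (norm_sub_le_norm_sub_add_norm_sub _ _ _) _
    _ = ‖M - truncate M r‖ + 2 * ‖M - N‖ := by rw [norm_sub_rev N M]; ring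

lemma tailNorm_le_schatten_sub_of_rank_le (p : ℝ≥0∞) (M : Matrix (Fin n) (Fin n) 𝕜)
    {C : Matrix (Fin n) (Fin n) 𝕜} {r : ℕ} (hC : C.rank ≤ r) :
    tailNorm p M r ≤ schatten p (M - C) := by
  have hweyl := sval_add_le_sval_sub_of_rank_le M hC
  have hpow (N : Matrix (Fin n) (Fin n) 𝕜) (i : ℕ) : 0 ≤ sval N i ^ p.toReal :=
    Real.rpow_nonneg (sval_nonneg N i) _
  unfold tailNorm schatten
  split_ifs
  · exact hweyl 0
  refine Real.rpow_le_rpow (Finset.sum_nonneg fun i _ => hpow M i) ?_ (by positivity)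
  rw [Finset.sum_Ico_eq_sum_range]
  calc ∑ i ∈ Finset.range (n - r), sval M (r + i) ^ p.toReal
      ≤ ∑ i ∈ Finset.range (n - r), sval (M - C) i ^ p.toReal :=
        Finset.sum_le_sum fun i _ =>
          Real.rpow_le_rpow (sval_nonneg M _) (hweyl i) ENNReal.toReal_nonneg
    _ ≤ ∑ i ∈ Finset.range n, sval (M - C) i ^ p.toReal :=
        Finset.sum_le_sum_of_subset_of_nonneg (Finset.range_subset_range.mpr (Nat.sub_le _ _))
          fun i _ _ => hpow _ i

lemma tailNorm_one_eq_sum_subtype (M : Matrix (Fin n) (Fin n) 𝕜) (r : ℕ) :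
    tailNorm 1 M r = ∑ j : {j : Fin n // ¬ (j : ℕ) < r}, sval M j := by
  have hfilter : Finset.Ico r n = (Finset.range n).filter (¬ · < r) := by
    ext i
    simp [and_comm]
  rw [← Finset.sum_subtype (Finset.univ.filter fun j : Fin n => ¬ (j : ℕ) < r) (by simp)
    fun j => sval M j, Finset.sum_filter,
    Fin.sum_univ_eq_sum_range (fun i => if ¬ i < r then sval M i else 0), ← Finset.sum_filter,
    ← hfilter]
  simp [tailNorm]

end SingularValues

section PosSemidef

open scoped MatrixOrder Matrix.Norms.L2Operator

variable {n : ℕ} {A : Matrix (Fin n) (Fin n) 𝕜}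

lemma exists_unitary_conjTranspose_mul_self_eq (M : Matrix (Fin n) (Fin n) 𝕜) :
    ∃ V ∈ unitaryGroup (Fin n) 𝕜,
      Mᴴ * M = V * diagonal (fun j : Fin n => ((sval M j ^ 2 : ℝ) : 𝕜)) * Vᴴ := by
  set b := rightSingularBasis M
  set V := (EuclideanSpace.basisFun (Fin n) 𝕜).toBasis.toMatrix b
  have hV : V ∈ unitaryGroup (Fin n) 𝕜 :=
    (EuclideanSpace.basisFun (Fin n) 𝕜).toMatrix_orthonormalBasis_mem_unitary b
  have hMV : Mᴴ * M * V = V * diagonal (fun j : Fin n => ((sval M j ^ 2 : ℝ) : 𝕜)) := by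
    ext i j
    have := congrArg (fun x : EuclideanSpace 𝕜 (Fin n) => x i)
      (toEuclideanCLM_conjTranspose_mul_self_rightSingularBasis M j)
    rw [mul_diagonal, mul_comm]
    exact this
  refine ⟨V, hV, ?_⟩
  rw [← hMV, Matrix.mul_assoc, ← star_eq_conjTranspose V, mem_unitaryGroup_iff.mp hV, mul_one]

lemma exists_unitary_eq_of_posSemidef (hA : A.PosSemidef) :
    ∃ V ∈ unitaryGroup (Fin n) 𝕜, A = V * diagonal (fun j : Fin n => (sval A j : 𝕜)) * Vᴴ := by
  obtain ⟨V, hV, hAV⟩ := exists_unitary_conjTranspose_mul_self_eq A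
  refine ⟨V, hV, ?_⟩
  set D := diagonal (fun j : Fin n => (sval A j : 𝕜))
  have hD : (V * D * Vᴴ).PosSemidef := (PosSemidef.diagonal fun j : Fin n =>
    RCLike.ofReal_nonneg.mpr (sval_nonneg A j)).mul_mul_conjTranspose_same V
  have hVV : Vᴴ * V = 1 := mem_unitaryGroup_iff'.mp hV
  rw [← CFC.sq_eq_sq_iff A (V * D * Vᴴ) hA.nonneg hD.nonneg]
  calc A ^ 2 = Aᴴ * A := by rw [hA.1.eq, sq]
    _ = V * (D * D) * Vᴴ := by rw [hAV, diagonal_mul_diagonal]; simp [sq]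
    _ = V * D * (Vᴴ * V) * D * Vᴴ := by rw [hVV]; simp only [Matrix.mul_assoc, Matrix.one_mul]
    _ = (V * D * Vᴴ) ^ 2 := by simp only [sq, Matrix.mul_assoc]

lemma norm_le_re_trace_of_posSemidef (hA : A.PosSemidef) : ‖A‖ ≤ RCLike.re A.trace := by
  obtain ⟨V, hV, hAV⟩ := exists_unitary_eq_of_posSemidef hA
  have htrace : RCLike.re A.trace = ∑ j : Fin n, sval A j := by
    conv_lhs => rw [hAV]
    rw [trace_mul_comm, ← Matrix.mul_assoc, ← star_eq_conjTranspose, mem_unitaryGroup_iff'.mp hV,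
      Matrix.one_mul, trace_diagonal]
    simp
  rw [← sval_zero_eq_norm, htrace]
  rcases n.eq_zero_or_pos with rfl | hn
  · simp [sval]
  · exact Finset.single_le_sum (f := fun j : Fin n => sval A j) (fun j _ => sval_nonneg A j)
      (Finset.mem_univ ⟨0, hn⟩)

end PosSemidef

section Nystrom

open scoped MatrixOrder

variable {n k : ℕ}

lemma isMoorePenrose_diagonal (d : Fin n → 𝕜) :
    IsMoorePenrose (diagonal d) (diagonal fun i => (d i)⁻¹) := by
  have hstar (a : 𝕜) : star (a * a⁻¹) = a * a⁻¹ := by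
    rcases eq_or_ne a 0 with rfl | ha <;> simp [*]
  simp only [IsMoorePenrose, diagonal_mul_diagonal, diagonal_conjTranspose, mul_inv_mul_cancel,
    diagonal_eq_diagonal_iff, true_and]
  refine ⟨fun i => ?_, fun i => hstar (d i), fun i => ?_⟩
  · simpa using mul_inv_mul_cancel (d i)⁻¹
  · rw [Pi.star_apply, mul_comm, hstar]

lemma IsMoorePenrose.map (φ : Matrix (Fin n) (Fin n) 𝕜 ≃⋆ₐ[𝕜] Matrix (Fin n) (Fin n) 𝕜)
    {M X : Matrix (Fin n) (Fin n) 𝕜} (h : IsMoorePenrose M X) :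
    IsMoorePenrose (φ M) (φ X) := by
  simp only [IsMoorePenrose, ← map_mul, ← star_eq_conjTranspose, ← map_star] at h ⊢
  exact ⟨congrArg φ h.1, congrArg φ h.2.1, congrArg φ h.2.2.1, congrArg φ h.2.2.2⟩

lemma exists_isMoorePenrose_of_isHermitian {M : Matrix (Fin n) (Fin n) 𝕜} (hM : M.IsHermitian) :
    ∃ X, IsMoorePenrose M X := by
  rw [hM.spectral_theorem]
  exact ⟨_, (isMoorePenrose_diagonal _).map _⟩

lemma mul_pinv_mul_of_isHermitian {M : Matrix (Fin n) (Fin n) 𝕜} (hM : M.IsHermitian) :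
    M * pinv M * M = M := by
  have hex := exists_isMoorePenrose_of_isHermitian hM
  rw [pinv, dif_pos hex]
  exact hex.choose_spec.1

lemma mul_mul_conjTranspose_mul_self {l m : Type*} [Fintype l] [Fintype m] {Q : Matrix l m 𝕜}
    {P : Matrix m m 𝕜} (hP : Qᴴ * Q * P * (Qᴴ * Q) = Qᴴ * Q) : Q * P * Qᴴ * Q = Q := by
  have hzero : Qᴴ * Q * (P * (Qᴴ * Q) - 1) = 0 := by
    rw [Matrix.mul_sub, ← Matrix.mul_assoc, hP, Matrix.mul_one, sub_self]
  rw [conjTranspose_mul_self_mul_eq_zero, Matrix.mul_sub, Matrix.mul_one, sub_eq_zero] at hzero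
  simpa only [Matrix.mul_assoc] using hzero

lemma isStarProjection_mul_mul_conjTranspose {l m : Type*} [Fintype l] [Fintype m]
    {Q : Matrix l m 𝕜} {P : Matrix m m 𝕜} (hP : Qᴴ * Q * P * (Qᴴ * Q) = Qᴴ * Q) :
    IsStarProjection (Q * P * Qᴴ) := by
  have hadj : (Q * P * Qᴴ)ᴴ = Q * Pᴴ * Qᴴ := by simp [conjTranspose_mul, Matrix.mul_assoc]
  have hmul : Q * P * Qᴴ * (Q * P * Qᴴ)ᴴ = (Q * P * Qᴴ)ᴴ := by
    rw [hadj, ← Matrix.mul_assoc, ← Matrix.mul_assoc, mul_mul_conjTranspose_mul_self hP]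
  have hself : IsSelfAdjoint (Q * P * Qᴴ) := by
    rw [← IsSelfAdjoint.star_iff, star_eq_conjTranspose, ← hmul]
    exact IsSelfAdjoint.mul_star_self _
  rw [← star_eq_conjTranspose, hself.star_eq] at hmul
  exact ⟨hmul, hself⟩

lemma conjTranspose_mul_self_eq_add_of_isStarProjection {l m : Type*} [Fintype l] [DecidableEq l]
    {P : Matrix l l 𝕜} (hP : IsStarProjection P) (Y : Matrix l m 𝕜) :
    Yᴴ * Y = ((1 - P) * Y)ᴴ * ((1 - P) * Y) + (P * Y)ᴴ * (P * Y) := by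
  have hadj : Pᴴ = P := hP.isSelfAdjoint
  have hPP : P * (P * Y) = P * Y := by rw [← Matrix.mul_assoc, hP.isIdempotentElem.eq]
  simp [conjTranspose_mul, hadj, Matrix.mul_assoc, Matrix.sub_mul, Matrix.mul_sub, hPP]

lemma exists_isStarProjection_sub_nystrom_eq {A : Matrix (Fin n) (Fin n) 𝕜} (hA : A.PosSemidef)
    (Ω : Matrix (Fin n) (Fin k) 𝕜) :
    ∃ B P : Matrix (Fin n) (Fin n) 𝕜, A = Bᴴ * B ∧ IsStarProjection P ∧
      P * (B * Ω) = B * Ω ∧ A - nystrom A Ω = ((1 - P) * B)ᴴ * ((1 - P) * B) := by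
  obtain ⟨B, rfl⟩ := CStarAlgebra.nonneg_iff_eq_star_mul_self.mp hA.nonneg
  set G := pinv (Ωᴴ * (Bᴴ * B) * Ω)
  set P := B * Ω * G * (B * Ω)ᴴ
  have hgram : (B * Ω)ᴴ * (B * Ω) = Ωᴴ * (Bᴴ * B) * Ω := by
    simp only [conjTranspose_mul, Matrix.mul_assoc]
  have hG : (B * Ω)ᴴ * (B * Ω) * G * ((B * Ω)ᴴ * (B * Ω)) = (B * Ω)ᴴ * (B * Ω) := by
    rw [hgram]
    exact mul_pinv_mul_of_isHermitian (hgram ▸ isHermitian_conjTranspose_mul_self _)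
  have hP : IsStarProjection P := isStarProjection_mul_mul_conjTranspose hG
  have hnys : nystrom (Bᴴ * B) Ω = (P * B)ᴴ * (P * B) := by
    rw [conjTranspose_mul, ← star_eq_conjTranspose P, hP.isSelfAdjoint.star_eq, Matrix.mul_assoc,
      ← Matrix.mul_assoc P, hP.isIdempotentElem.eq]
    simp only [nystrom, conjTranspose_mul, Matrix.mul_assoc, P, G]
  refine ⟨B, P, rfl, hP, mul_mul_conjTranspose_mul_self hG, ?_⟩
  rw [star_eq_conjTranspose, hnys, conjTranspose_mul_self_eq_add_of_isStarProjection hP B,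
    add_sub_cancel_right]

lemma posSemidef_sub_nystrom {A : Matrix (Fin n) (Fin n) 𝕜} (hA : A.PosSemidef)
    (Ω : Matrix (Fin n) (Fin k) 𝕜) : (A - nystrom A Ω).PosSemidef := by
  obtain ⟨B, P, -, -, -, hsub⟩ := exists_isStarProjection_sub_nystrom_eq hA Ω
  exact hsub ▸ posSemidef_conjTranspose_mul_self _

lemma sub_nystrom_le {A : Matrix (Fin n) (Fin n) 𝕜} (hA : A.PosSemidef)
    (Ω : Matrix (Fin n) (Fin k) 𝕜) (X : Matrix (Fin k) (Fin n) 𝕜) :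
    A - nystrom A Ω ≤ (1 - Ω * X)ᴴ * A * (1 - Ω * X) := by
  obtain ⟨B, P, hB, hP, hfix, hsub⟩ := exists_isStarProjection_sub_nystrom_eq hA Ω
  have hoff : (1 - P) * (B * (1 - Ω * X)) = (1 - P) * B := by
    rw [Matrix.mul_sub B, ← Matrix.mul_assoc B, Matrix.mul_sub, ← Matrix.mul_assoc _ (B * Ω),
      Matrix.sub_mul 1 P (B * Ω), hfix]
    simp
  have hsplit : (1 - Ω * X)ᴴ * A * (1 - Ω * X) =
      (A - nystrom A Ω) + (P * (B * (1 - Ω * X)))ᴴ * (P * (B * (1 - Ω * X))) := by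
    rw [hsub, ← hoff, ← conjTranspose_mul_self_eq_add_of_isStarProjection hP, hB]
    simp only [conjTranspose_mul, Matrix.mul_assoc]
  rw [hsplit]
  exact le_add_of_nonneg_right (posSemidef_conjTranspose_mul_self _).nonneg

lemma nystrom_conj {V : Matrix (Fin n) (Fin n) 𝕜} (hV : Vᴴ * V = 1)
    (A : Matrix (Fin n) (Fin n) 𝕜) (Ω : Matrix (Fin n) (Fin k) 𝕜) :
    nystrom (V * A * Vᴴ) (V * Ω) = V * nystrom A Ω * Vᴴ := by
  have hcancel (l : Type) [Fintype l] (Y : Matrix (Fin n) l 𝕜) : Vᴴ * (V * Y) = Y := by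
    rw [← Matrix.mul_assoc, hV, Matrix.one_mul]
  simp only [nystrom, conjTranspose_mul, Matrix.mul_assoc, hcancel]

lemma re_trace_le_re_trace {A B : Matrix (Fin n) (Fin n) 𝕜} (h : A ≤ B) :
    RCLike.re A.trace ≤ RCLike.re B.trace := by
  have := (RCLike.nonneg_iff.mp (Matrix.le_iff.mp h).trace_nonneg).1
  rwa [trace_sub, map_sub, sub_nonneg] at this

lemma re_trace_conjTranspose_mul_diagonal_mul {l m : Type*} [Fintype l] [DecidableEq l] [Fintype m]
    (d : l → ℝ) (R : Matrix l m 𝕜) :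
    RCLike.re (Rᴴ * diagonal (fun i => (d i : 𝕜)) * R).trace = ∑ i, d i * ∑ j, ‖R i j‖ ^ 2 := by
  rw [Matrix.mul_assoc, trace_mul_comm, Matrix.mul_assoc, trace, map_sum]
  refine Finset.sum_congr rfl fun i _ => ?_
  rw [diag_apply, diagonal_mul, Matrix.mul_apply, RCLike.re_ofReal_mul, map_sum]
  simp_rw [conjTranspose_apply, RCLike.star_def, RCLike.mul_conj]
  norm_cast

-- The test matrix `X` has the dual vector `c j` as its `j`-th column when `p j` holds and zero
-- otherwise, so that `1 - Ω * X` vanishes on the rows in `p`.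
lemma re_trace_sub_nystrom_diagonal_le {d : Fin n → ℝ} (hd : ∀ i, 0 ≤ d i) (p : Fin n → Prop)
    [DecidablePred p] (Ω : Matrix (Fin n) (Fin k) 𝕜) (c : {i // p i} → Fin k → 𝕜)
    (hc : ∀ i j : {i // p i}, Ω i ⬝ᵥ c j = if i = j then 1 else 0) :
    RCLike.re (diagonal (fun i => (d i : 𝕜)) - nystrom (diagonal fun i => (d i : 𝕜)) Ω).trace ≤
      ∑ j : {j // ¬ p j}, d j * (1 + ∑ i, ‖Ω j ⬝ᵥ c i‖ ^ 2) := by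
  let X : Matrix (Fin k) (Fin n) 𝕜 := Matrix.of fun a j => if hj : p j then c ⟨j, hj⟩ a else 0
  set R : Matrix (Fin n) (Fin n) 𝕜 := 1 - Ω * X
  have hR_in (i : Fin n) (j : {j // p j}) :
      R i j = (1 : Matrix (Fin n) (Fin n) 𝕜) i j - Ω i ⬝ᵥ c j := by
    simp [R, X, Matrix.mul_apply, dotProduct, j.2]
  have hR_out (i : Fin n) (j : {j // ¬ p j}) : R i j = (1 : Matrix (Fin n) (Fin n) 𝕜) i j := by
    simp [R, X, Matrix.mul_apply, j.2]
  have hrow (i : Fin n) : ∑ j, ‖R i j‖ ^ 2 = ∑ j : {j // p j}, ‖R i j‖ ^ 2 +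
      ∑ j : {j // ¬ p j}, ‖R i j‖ ^ 2 := (Fintype.sum_subtype_add_sum_subtype p _).symm
  have hrow_in (i : {i // p i}) : ∑ j, ‖R i j‖ ^ 2 = 0 := by
    have hne (j : {j // ¬ p j}) : (i : Fin n) ≠ j := fun h => j.2 (h ▸ i.2)
    simp [hrow, hR_in, hR_out, hc, one_apply, hne, Subtype.ext_iff]
  have hrow_out (i : {i // ¬ p i}) : ∑ j, ‖R i j‖ ^ 2 = 1 + ∑ j, ‖Ω i ⬝ᵥ c j‖ ^ 2 := by
    have hne (j : {j // p j}) : (i : Fin n) ≠ j := fun h => i.2 (h ▸ j.2)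
    have hone : ∑ j : {j // ¬ p j}, ‖(1 : Matrix (Fin n) (Fin n) 𝕜) i j‖ ^ 2 = 1 := by
      rw [Fintype.sum_eq_single i fun j hj => by simp [one_apply, Subtype.ext_iff.not.mp hj.symm]]
      simp
    simp [hrow, hR_in, hR_out, hone, hne, add_comm]
  have hdpsd : (diagonal fun i => (d i : 𝕜)).PosSemidef :=
    PosSemidef.diagonal fun i => RCLike.ofReal_nonneg.mpr (hd i)
  calc _ ≤ _ := re_trace_le_re_trace (sub_nystrom_le hdpsd Ω X)
    _ = ∑ i, d i * ∑ j, ‖R i j‖ ^ 2 := re_trace_conjTranspose_mul_diagonal_mul d _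
    _ = _ := by
      rw [← Fintype.sum_subtype_add_sum_subtype p]
      simp only [hrow_in, hrow_out, mul_zero, Finset.sum_const_zero, zero_add]

end Nystrom

section Gaussian

open Module
open scoped InnerProductSpace

lemma lintegral_exp_neg_mul_sq_gaussianReal {s : ℝ} (hs : 0 ≤ s) :
    ∫⁻ x, ENNReal.ofReal (Real.exp (-(s * x ^ 2))) ∂gaussianReal 0 1 =
      ENNReal.ofReal ((1 + 2 * s) ^ (-(1 / 2) : ℝ)) := by
  have hint : Integrable (fun x => Real.exp (-(s * x ^ 2))) (gaussianReal 0 1) :=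
    .of_bound (C := 1) (by fun_prop) <| .of_forall fun x => by
      rw [Real.norm_eq_abs, Real.abs_exp, Real.exp_le_one_iff, neg_nonpos]
      positivity
  have hexp (x : ℝ) : gaussianPDFReal 0 1 x • Real.exp (-(s * x ^ 2)) =
      (√(2 * Real.pi))⁻¹ * Real.exp (-(1 / 2 + s) * x ^ 2) := by
    rw [gaussianPDFReal, smul_eq_mul, mul_assoc, ← Real.exp_add]
    simp only [NNReal.coe_one, mul_one, sub_zero]
    ring_nf
  rw [← ofReal_integral_eq_lintegral_ofReal hint (.of_forall fun _ => (Real.exp_pos _).le),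
    integral_gaussianReal_eq_integral_smul one_ne_zero]
  simp_rw [hexp]
  rw [integral_const_mul, integral_gaussian, ← Real.sqrt_inv, ← Real.sqrt_mul (by positivity),
    Real.rpow_neg (by positivity), ← Real.sqrt_eq_rpow, ← Real.sqrt_inv]
  congr 2
  field_simp

lemma lintegral_Ioi_one_add_two_mul_rpow {a : ℝ} (ha : 2 < a) :
    ∫⁻ s in Set.Ioi (0 : ℝ), ENNReal.ofReal ((1 + 2 * s) ^ (-(a / 2))) =
      ENNReal.ofReal (1 / (a - 2)) := by
  set F : ℝ → ℝ := fun s => -(1 / (a - 2)) * (1 + 2 * s) ^ (1 - a / 2)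
  have hderiv (s : ℝ) (hs : s ∈ Set.Ici 0) : HasDerivAt F ((1 + 2 * s) ^ (-(a / 2))) s := by
    have hlin : HasDerivAt (fun s : ℝ => 1 + 2 * s) 2 s := by
      simpa using ((hasDerivAt_id s).const_mul 2).const_add 1
    have hs' : 1 + 2 * s ≠ 0 := by linarith [Set.mem_Ici.mp hs]
    have ha' : a - 2 ≠ 0 := by linarith
    refine ((hlin.rpow_const (p := 1 - a / 2) (.inl hs')).const_mul
      (-(1 / (a - 2)))).congr_deriv ?_
    rw [show 1 - a / 2 - 1 = -(a / 2) by ring]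
    field_simp
    ring
  have hlim : Filter.Tendsto F Filter.atTop (nhds 0) := by
    have hlin : Filter.Tendsto (fun s : ℝ => 1 + 2 * s) .atTop .atTop :=
      Filter.tendsto_atTop_add_const_left _ _ (Filter.tendsto_id.const_mul_atTop two_pos)
    have := ((tendsto_rpow_neg_atTop (y := a / 2 - 1) (by linarith)).comp hlin).const_mul
      (-(1 / (a - 2)))
    simpa only [Function.comp_def, neg_sub, mul_zero] using this
  have hpos : ∀ s ∈ Set.Ioi (0 : ℝ), 0 ≤ (1 + 2 * s) ^ (-(a / 2)) := fun s hs => by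
    have := Set.mem_Ioi.mp hs
    positivity
  have hint := integrableOn_Ioi_deriv_of_nonneg' hderiv hpos hlim
  rw [← ofReal_integral_eq_lintegral_ofReal hint
    ((ae_restrict_iff' measurableSet_Ioi).2 (.of_forall hpos)),
    integral_Ioi_of_hasDerivAt_of_tendsto' hderiv hint hlim]
  simp [F]

lemma lintegral_Ioi_exp_neg_mul {t : ℝ} (ht : 0 ≤ t) :
    ∫⁻ s in Set.Ioi (0 : ℝ), ENNReal.ofReal (Real.exp (-(s * t))) = (ENNReal.ofReal t)⁻¹ := by
  rcases ht.eq_or_lt with rfl | ht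
  · simp
  have hint := integrableOn_exp_mul_Ioi (neg_lt_zero.mpr ht) 0
  simp_rw [← mul_neg, mul_comm _ (-t)]
  rw [← ofReal_integral_eq_lintegral_ofReal hint (.of_forall fun _ => (Real.exp_pos _).le),
    integral_exp_mul_Ioi (neg_lt_zero.mpr ht), ← ENNReal.ofReal_inv_of_pos ht]
  simp

variable {E : Type*} [NormedAddCommGroup E] [InnerProductSpace ℝ E] [FiniteDimensional ℝ E]
  [MeasurableSpace E] [BorelSpace E]

lemma lintegral_exp_neg_mul_norm_sq_stdGaussian {s : ℝ} (hs : 0 ≤ s) :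
    ∫⁻ x, ENNReal.ofReal (Real.exp (-(s * ‖x‖ ^ 2))) ∂stdGaussian E =
      ENNReal.ofReal ((1 + 2 * s) ^ (-((finrank ℝ E : ℝ) / 2))) := by
  set b := stdOrthonormalBasis ℝ E
  have hfactor (x : Fin (finrank ℝ E) → ℝ) :
      ENNReal.ofReal (Real.exp (-(s * ‖∑ i, x i • b i‖ ^ 2))) =
        ∏ i, ENNReal.ofReal (Real.exp (-(s * x i ^ 2))) := by
    rw [← ENNReal.ofReal_prod_of_nonneg fun _ _ => (Real.exp_pos _).le, ← Real.exp_sum,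
      Finset.sum_neg_distrib, ← Finset.mul_sum, ← b.sum_sq_norm_inner_right]
    simp [b.orthonormal.inner_right_fintype]
  rw [stdGaussian_eq_map_pi_orthonormalBasis b, lintegral_map (by fun_prop) (by fun_prop)]
  simp_rw [hfactor]
  rw [lintegral_prod_eq_prod_lintegral_of_indepFun Finset.univ _
    (iIndepFun_pi (X := fun _ t => ENNReal.ofReal (Real.exp (-(s * t ^ 2)))) fun _ => by fun_prop)
    fun _ => by fun_prop]
  simp_rw [(measurePreserving_eval (fun _ : Fin (finrank ℝ E) => gaussianReal 0 1) _).lintegral_comp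
    (f := fun t => ENNReal.ofReal (Real.exp (-(s * t ^ 2)))) (by fun_prop),
    lintegral_exp_neg_mul_sq_gaussianReal hs]
  rw [Finset.prod_const, ← ENNReal.ofReal_pow (by positivity), ← Real.rpow_natCast,
    ← Real.rpow_mul (by positivity)]
  congr 2
  simp only [one_div, Finset.card_univ, Fintype.card_fin, neg_mul, neg_inj]
  ring

-- Write `‖x‖⁻² = ∫ s in 0..∞, exp (-s ‖x‖²)` and exchange the integrals.
lemma lintegral_inv_enorm_sq_stdGaussian (hE : 2 < finrank ℝ E) :
    ∫⁻ x, (‖x‖ₑ ^ 2)⁻¹ ∂stdGaussian E = ENNReal.ofReal (1 / (finrank ℝ E - 2)) := by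
  have hinv (x : E) : (‖x‖ₑ ^ 2)⁻¹ =
      ∫⁻ s in Set.Ioi (0 : ℝ), ENNReal.ofReal (Real.exp (-(s * ‖x‖ ^ 2))) := by
    rw [lintegral_Ioi_exp_neg_mul (sq_nonneg _), ENNReal.ofReal_pow (norm_nonneg _),
      ofReal_norm]
  simp_rw [hinv]
  rw [lintegral_lintegral_swap (by fun_prop),
    setLIntegral_congr_fun measurableSet_Ioi fun s hs =>
      lintegral_exp_neg_mul_norm_sq_stdGaussian (Set.mem_Ioi.mp hs).le]
  exact lintegral_Ioi_one_add_two_mul_rpow (by exact_mod_cast hE)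

lemma lintegral_enorm_inner_sq_stdGaussian (c : E) :
    ∫⁻ x, ‖⟪x, c⟫_ℝ‖ₑ ^ 2 ∂stdGaussian E = ‖c‖ₑ ^ 2 := by
  have hL : MemLp (innerSL ℝ c) 2 (stdGaussian E) := IsGaussian.memLp_dual _ _ 2 (by simp)
  have hvar := variance_dual_stdGaussian (innerSL ℝ c)
  rw [variance_of_integral_eq_zero (by fun_prop) (integral_strongDual_stdGaussian _),
    innerSL_apply_norm] at hvar
  have henorm (x : E) : ‖⟪x, c⟫_ℝ‖ₑ ^ 2 = ENNReal.ofReal (innerSL ℝ c x ^ 2) := by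
    rw [innerSL_apply_apply, real_inner_comm, ← sq_abs, ENNReal.ofReal_pow (abs_nonneg _),
      ← Real.enorm_eq_ofReal_abs]
  simp_rw [henorm]
  rw [← ofReal_integral_eq_lintegral_ofReal hL.integrable_sq (.of_forall fun _ => sq_nonneg _),
    hvar, ENNReal.ofReal_pow (norm_nonneg _), ofReal_norm]

lemma stdGaussian_map_orthogonalProjectionOnto (U : Submodule ℝ E) :
    (stdGaussian E).map U.orthogonalProjectionOnto = stdGaussian U := by
  apply Measure.ext_of_charFun
  ext t
  rw [charFun_stdGaussian, charFun_apply, integral_map (by fun_prop) (by fun_prop)]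
  have := charFun_stdGaussian (t : E)
  simpa [charFun_apply] using this

end Gaussian

section LeaveOneOut

open Module
open scoped InnerProductSpace

variable {ι E : Type*} [NormedAddCommGroup E] [InnerProductSpace ℝ E]

/-- The distance from the `i`-th vector of a family to the span of the other vectors. It is the
reciprocal of the norm of the `i`-th vector of the dual family. -/
noncomputable def leaveOneOutDist (x : ι → E) (i : ι) : ℝ≥0∞ :=
  Metric.infEDist (x i) (Submodule.span ℝ (x '' {i}ᶜ))

lemma infEDist_eq_enorm_orthogonalProjectionOnto_orthogonal (U : Submodule ℝ E)
    [U.HasOrthogonalProjection] (v : E) :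
    Metric.infEDist v U = ‖Uᗮ.orthogonalProjectionOnto v‖ₑ := by
  refine le_antisymm ?_ (Metric.le_infEDist.mpr fun u hu => ?_)
  · refine (Metric.infEDist_le_edist_of_mem (U.starProjection_apply_mem v)).trans_eq ?_
    rw [edist_eq_enorm_sub, ← U.starProjection_orthogonal_val, Submodule.starProjection_apply]
    rfl
  · have hu' : Uᗮ.orthogonalProjectionOnto u = 0 :=
      Uᗮ.orthogonalProjectionOnto_eq_zero_iff.mpr (U.le_orthogonal_orthogonal hu)
    rw [edist_eq_enorm_sub, ← sub_zero (Uᗮ.orthogonalProjectionOnto v), ← hu', ← map_sub]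
    exact enorm_le_iff_norm_le.mpr (Uᗮ.norm_orthogonalProjectionOnto_apply_le _)

lemma exists_forall_inner_eq_ite [Finite ι] {x : ι → E} {i : ι} (hi : leaveOneOutDist x i ≠ 0) :
    ∃ c : E, (∀ j, ⟪x j, c⟫_ℝ = if j = i then 1 else 0) ∧
      ‖c‖ₑ ^ 2 = (leaveOneOutDist x i ^ 2)⁻¹ := by
  set U := Submodule.span ℝ (x '' {i}ᶜ)
  have : FiniteDimensional ℝ U := FiniteDimensional.span_of_finite ℝ (Set.toFinite _)
  set q := Uᗮ.orthogonalProjectionOnto (x i)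
  have hdist : leaveOneOutDist x i = ‖q‖ₑ :=
    infEDist_eq_enorm_orthogonalProjectionOnto_orthogonal U (x i)
  have hq : ‖q‖ ≠ 0 := by simpa [hdist] using hi
  have hq_self : ⟪x i, q⟫_ℝ = ‖q‖ ^ 2 := by
    rw [← Submodule.inner_orthogonalProjectionOnto_eq_of_mem_right, real_inner_self_eq_norm_sq]
  have hq_other {j : ι} (hj : j ≠ i) : ⟪x j, q⟫_ℝ = 0 :=
    Submodule.inner_right_of_mem_orthogonal (K := U)
      (Submodule.subset_span (Set.mem_image_of_mem x hj)) q.2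
  refine ⟨(‖q‖ ^ 2)⁻¹ • (q : E), fun j => ?_, ?_⟩
  · rw [real_inner_smul_right]
    split_ifs with hj
    · rw [hj, hq_self, inv_mul_cancel₀ (pow_ne_zero 2 hq)]
    · rw [hq_other hj, mul_zero]
  · have hnorm : ‖(‖q‖ ^ 2)⁻¹ • (q : E)‖ = ‖q‖⁻¹ := by
      rw [norm_smul, norm_inv, norm_pow, norm_norm, Submodule.coe_norm]
      field_simp
    rw [hdist, ← ofReal_norm, hnorm, ENNReal.ofReal_inv_of_pos (by positivity), ofReal_norm,
      ENNReal.inv_pow]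

lemma leaveOneOutDist_eq_iInf [Fintype ι] (x : ι → E) (i : ι) :
    leaveOneOutDist x i = ⨅ a : ι → ℝ, edist (x i) (∑ l ∈ {i}ᶜ, a l • x l) := by
  have hspan : (Submodule.span ℝ (x '' {i}ᶜ) : Set E) =
      Set.range fun a : ι → ℝ => ∑ l ∈ {i}ᶜ, a l • x l := by
    ext v
    rw [SetLike.mem_coe, ← Finset.coe_singleton, ← Finset.coe_compl,
      Submodule.mem_span_image_finset_iff_exists_fun']
    rfl
  rw [leaveOneOutDist, hspan, Metric.infEDist, iInf_range]

variable [FiniteDimensional ℝ E]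

lemma measurable_leaveOneOutDist [Finite ι] [MeasurableSpace E] [BorelSpace E] (i : ι) :
    Measurable fun x : ι → E => leaveOneOutDist x i := by
  cases nonempty_fintype ι
  simp_rw [leaveOneOutDist_eq_iInf]
  exact (upperSemicontinuous_iInf fun a => Continuous.upperSemicontinuous (by fun_prop)).measurable

variable [Fintype ι]

lemma lintegral_pi_le_of_forall_update {X : ι → Type*} [∀ i, MeasurableSpace (X i)]
    (μ : ∀ i, Measure (X i)) [∀ i, IsProbabilityMeasure (μ i)] {f : (∀ i, X i) → ℝ≥0∞}
    (hf : Measurable f) {i : ι} {C : ℝ≥0∞}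
    (hC : ∀ x, ∫⁻ y, f (Function.update x i y) ∂μ i ≤ C) : ∫⁻ x, f x ∂Measure.pi μ ≤ C := by
  obtain ⟨x₀⟩ : Nonempty (∀ i, X i) := ⟨fun i => (nonempty_of_isProbabilityMeasure (μ i)).some⟩
  rw [lintegral_eq_lmarginal_univ x₀, lmarginal_erase' _ hf (Finset.mem_univ i)]
  refine (lmarginal_mono (g := fun _ => C) hC x₀).trans ?_
  simp [lmarginal]

lemma natCast_sub_natCast_sub_one_pos {a b : ℕ} (h : a + 1 < b) : (0 : ℝ) < b - a - 1 := by
  have : (a : ℝ) + 1 < b := by exact_mod_cast h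
  linarith

lemma lintegral_inv_leaveOneOutDist_sq_le [MeasurableSpace E] [BorelSpace E]
    (hE : Fintype.card ι + 1 < finrank ℝ E) (i : ι) :
    ∫⁻ x, (leaveOneOutDist x i ^ 2)⁻¹ ∂Measure.pi (fun _ : ι => stdGaussian E) ≤
      ENNReal.ofReal (1 / (finrank ℝ E - Fintype.card ι - 1)) := by
  refine lintegral_pi_le_of_forall_update _ (i := i)
    ((measurable_leaveOneOutDist i).pow_const 2).inv fun x => ?_
  set U := Submodule.span ℝ (x '' {i}ᶜ)
  have hU : finrank ℝ U + 1 ≤ Fintype.card ι := by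
    have hspan := finrank_span_finset_le_card (R := ℝ) (({i}ᶜ : Finset ι).image x)
    rw [Finset.coe_image, Finset.coe_compl, Finset.coe_singleton] at hspan
    rw [← Finset.card_compl_add_card {i}, Finset.card_singleton]
    exact Nat.add_le_add_right (hspan.trans Finset.card_image_le) 1
  have hcompl := U.finrank_add_finrank_orthogonal
  have hdist (y : E) : leaveOneOutDist (Function.update x i y) i =
      ‖Uᗮ.orthogonalProjectionOnto y‖ₑ := by
    have himage : Function.update x i y '' {i}ᶜ = x '' {i}ᶜ :=
      Set.image_congr fun l hl => Function.update_of_ne hl _ _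
    rw [leaveOneOutDist, Function.update_self, himage,
      infEDist_eq_enorm_orthogonalProjectionOnto_orthogonal]
  have hgap : (finrank ℝ E : ℝ) - Fintype.card ι - 1 ≤ finrank ℝ Uᗮ - 2 := by
    have : (finrank ℝ U : ℝ) + 1 ≤ Fintype.card ι := by exact_mod_cast hU
    have : (finrank ℝ U : ℝ) + finrank ℝ Uᗮ = finrank ℝ E := by exact_mod_cast hcompl
    linarith
  have hpos := natCast_sub_natCast_sub_one_pos hE
  calc ∫⁻ y, (leaveOneOutDist (Function.update x i y) i ^ 2)⁻¹ ∂stdGaussian E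
      = ∫⁻ z, (‖z‖ₑ ^ 2)⁻¹ ∂stdGaussian Uᗮ := by
        simp_rw [hdist]
        rw [← stdGaussian_map_orthogonalProjectionOnto, lintegral_map (by fun_prop) (by fun_prop)]
    _ = ENNReal.ofReal (1 / (finrank ℝ Uᗮ - 2)) :=
        lintegral_inv_enorm_sq_stdGaussian (by omega)
    _ ≤ ENNReal.ofReal (1 / (finrank ℝ E - Fintype.card ι - 1)) := by gcongr

lemma ae_forall_leaveOneOutDist_ne_zero [MeasurableSpace E] [BorelSpace E]
    (hE : Fintype.card ι + 1 < finrank ℝ E) :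
    ∀ᵐ x ∂Measure.pi (fun _ : ι => stdGaussian E), ∀ i, leaveOneOutDist x i ≠ 0 := by
  rw [ae_all_iff]
  intro i
  have hfin := ae_lt_top ((measurable_leaveOneOutDist (E := E) i).pow_const 2).inv
    ((lintegral_inv_leaveOneOutDist_sq_le hE i).trans_lt ENNReal.ofReal_lt_top).ne
  filter_upwards [hfin] with x hx hzero
  simp [hzero] at hx

end LeaveOneOut

section GaussianEnsemble

open scoped InnerProductSpace

lemma measurePreserving_curry_pi {ι κ X : Type*} [Fintype ι] [Fintype κ] [MeasurableSpace X]
    (μ : ι → κ → Measure X) [∀ i j, IsProbabilityMeasure (μ i j)] :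
    MeasurePreserving (MeasurableEquiv.curry ι κ X) (Measure.pi fun q => μ q.1 q.2)
      (Measure.pi fun i => Measure.pi (μ i)) :=
  ⟨MeasurableEquiv.measurable _, by
    simpa only [Measure.infinitePi_eq_pi] using Measure.infinitePi_map_curry μ⟩

lemma measurePreserving_toLp_stdGaussian (ι : Type*) [Fintype ι] :
    MeasurePreserving (MeasurableEquiv.toLp 2 (ι → ℝ)) (Measure.pi fun _ => gaussianReal 0 1)
      (stdGaussian (EuclideanSpace ℝ ι)) :=
  ⟨MeasurableEquiv.measurable _, map_pi_eq_stdGaussian⟩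

lemma measurePreserving_mulVec_pi_gaussianReal {ι : Type*} [Fintype ι] [DecidableEq ι]
    {Q : Matrix ι ι ℝ} (hQ : Q ∈ unitary (Matrix ι ι ℝ)) :
    MeasurePreserving (Q *ᵥ ·) (Measure.pi fun _ : ι => gaussianReal 0 1)
      (Measure.pi fun _ => gaussianReal 0 1) := by
  have htoLp := measurePreserving_toLp_stdGaussian ι
  have hrot : MeasurePreserving (toEuclideanCLM (𝕜 := ℝ) Q) (stdGaussian (EuclideanSpace ℝ ι))
      (stdGaussian (EuclideanSpace ℝ ι)) :=
    ⟨by fun_prop, stdGaussian_map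
      (Unitary.linearIsometryEquiv ⟨_, Unitary.map_mem (toEuclideanCLM (𝕜 := ℝ)) hQ⟩)⟩
  exact (htoLp.symm _).comp (hrot.comp htoLp)

variable {n k : ℕ}

instance : IsProbabilityMeasure (gaussianEnsemble n k) :=
  inferInstanceAs (IsProbabilityMeasure (Measure.pi _))

lemma measurePreserving_mul_gaussianEnsemble {V : Matrix (Fin n) (Fin n) ℝ}
    (hV : V ∈ unitaryGroup (Fin n) ℝ) :
    MeasurePreserving (fun ω => V * Matrix.of ω) (gaussianEnsemble n k) (gaussianEnsemble n k) := by
  have hcurry : MeasurePreserving (MeasurableEquiv.curry (Fin n) (Fin k) ℝ)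
      (Measure.pi fun _ => gaussianReal 0 1) (gaussianEnsemble n k) :=
    measurePreserving_curry_pi fun _ _ => gaussianReal 0 1
  have hrot := measurePreserving_mulVec_pi_gaussianReal
    (kronecker_mem_unitary hV (one_mem (unitary (Matrix (Fin k) (Fin k) ℝ))))
  convert hcurry.comp (hrot.comp (hcurry.symm _)) using 1
  ext ω i a
  have huncurry : (MeasurableEquiv.curry (Fin n) (Fin k) ℝ).symm ω = vec (Matrix.of ω)ᵀ := rfl
  simp only [Function.comp_apply, huncurry, kronecker_mulVec_vec, Matrix.one_mul, ← transpose_mul]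
  rfl

lemma measurePreserving_ofLp_stdGaussian_gaussianEnsemble (n k : ℕ) :
    MeasurePreserving (fun (x : Fin n → EuclideanSpace ℝ (Fin k)) i => WithLp.ofLp (x i))
      (Measure.pi fun _ => stdGaussian (EuclideanSpace ℝ (Fin k))) (gaussianEnsemble n k) :=
  measurePreserving_pi _ _ fun _ => (measurePreserving_toLp_stdGaussian (Fin k)).symm _

lemma lintegral_pi_le_lintegral_lintegral_subtype {ι : Type*} [Fintype ι] {X : ι → Type*}
    [∀ i, MeasurableSpace (X i)] (μ : ∀ i, Measure (X i)) [∀ i, SigmaFinite (μ i)]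
    (p : ι → Prop) [DecidablePred p] (f : (∀ i, X i) → ℝ≥0∞) :
    ∫⁻ z, f z ∂Measure.pi μ ≤
      ∫⁻ x, ∫⁻ y, f (fun i => if h : p i then x ⟨i, h⟩ else y ⟨i, h⟩)
        ∂(Measure.pi fun i : {i // ¬ p i} => μ i) ∂(Measure.pi fun i : {i // p i} => μ i) := by
  rw [← (measurePreserving_piEquivPiSubtypeProd μ p).symm.map_eq]
  exact (lintegral_map_le _ _).trans (lintegral_prod_le _)

lemma lintegral_sum_mul_one_add_sum_enorm_inner_sq {ι κ E : Type*} [Fintype ι] [Fintype κ]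
    [NormedAddCommGroup E] [InnerProductSpace ℝ E] [FiniteDimensional ℝ E] [MeasurableSpace E]
    [BorelSpace E] (s : κ → ℝ≥0∞) (c : ι → E) :
    ∫⁻ y : κ → E, ∑ j, s j * (1 + ∑ i, ‖⟪y j, c i⟫_ℝ‖ₑ ^ 2) ∂(Measure.pi fun _ => stdGaussian E) =
      (∑ j, s j) * (1 + ∑ i, ‖c i‖ₑ ^ 2) := by
  have hrow (j : κ) : ∫⁻ y : κ → E, (1 + ∑ i, ‖⟪y j, c i⟫_ℝ‖ₑ ^ 2)
      ∂(Measure.pi fun _ => stdGaussian E) = 1 + ∑ i, ‖c i‖ₑ ^ 2 := by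
    rw [(measurePreserving_eval (fun _ : κ => stdGaussian E) j).lintegral_comp
        (f := fun z => 1 + ∑ i, ‖⟪z, c i⟫_ℝ‖ₑ ^ 2) (by fun_prop),
      lintegral_add_left measurable_const, lintegral_finsetSum _ fun i _ => by fun_prop]
    simp [lintegral_enorm_inner_sq_stdGaussian]
  rw [lintegral_finsetSum _ fun j _ => by fun_prop, Finset.sum_mul]
  refine Finset.sum_congr rfl fun j _ => ?_
  rw [lintegral_const_mul _ (by fun_prop), hrow]

end GaussianEnsemble

section ExpectedError

open scoped InnerProductSpace Matrix.Norms.L2Operator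

variable {n k : ℕ}

lemma ofReal_trace_sub_nystrom_diagonal_le {d : Fin n → ℝ} (hd : ∀ i, 0 ≤ d i) (p : Fin n → Prop)
    [DecidablePred p] (x : Fin n → EuclideanSpace ℝ (Fin k))
    (c : {i // p i} → EuclideanSpace ℝ (Fin k))
    (hc : ∀ i j : {i // p i}, ⟪x i, c j⟫_ℝ = if i = j then 1 else 0) :
    ENNReal.ofReal (diagonal d - nystrom (diagonal d) (Matrix.of fun i => (x i).ofLp)).trace ≤
      ∑ j : {j // ¬ p j}, ENNReal.ofReal (d j) * (1 + ∑ i, ‖⟪x j, c i⟫_ℝ‖ₑ ^ 2) := by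
  set Ω : Matrix (Fin n) (Fin k) ℝ := Matrix.of fun i => (x i).ofLp
  have hdot (i : Fin n) (j : {j // p j}) : Ω i ⬝ᵥ (c j).ofLp = ⟪x i, c j⟫_ℝ := by
    simp [Ω, PiLp.inner_apply, dotProduct, mul_comm]
  have htrace := re_trace_sub_nystrom_diagonal_le (𝕜 := ℝ) hd p Ω (fun i => (c i).ofLp)
    fun i j => (hdot i j).trans (hc i j)
  simp only [hdot] at htrace
  refine (ENNReal.ofReal_le_ofReal htrace).trans_eq ?_
  have hterm (j : {j // ¬ p j}) : 0 ≤ d j * (1 + ∑ i, ‖⟪x j, c i⟫_ℝ‖ ^ 2) :=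
    mul_nonneg (hd j) (by positivity)
  rw [ENNReal.ofReal_sum_of_nonneg fun j _ => hterm j]
  refine Finset.sum_congr rfl fun j _ => ?_
  rw [ENNReal.ofReal_mul (hd j), ENNReal.ofReal_add zero_le_one (by positivity),
    ENNReal.ofReal_one, ENNReal.ofReal_sum_of_nonneg fun i _ => by positivity]
  simp_rw [ENNReal.ofReal_pow (norm_nonneg _), ofReal_norm]

lemma lintegral_ofReal_trace_sub_nystrom_diagonal_le_of_rows {d : Fin n → ℝ} (hd : ∀ i, 0 ≤ d i)
    (p : Fin n → Prop) [DecidablePred p] {x : {i // p i} → EuclideanSpace ℝ (Fin k)}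
    (hx : ∀ i, leaveOneOutDist x i ≠ 0) :
    ∫⁻ y : {i // ¬ p i} → EuclideanSpace ℝ (Fin k),
        ENNReal.ofReal (diagonal d - nystrom (diagonal d)
          (Matrix.of fun i => (if h : p i then x ⟨i, h⟩ else y ⟨i, h⟩).ofLp)).trace
        ∂(Measure.pi fun _ => stdGaussian _) ≤
      (∑ j : {j // ¬ p j}, ENNReal.ofReal (d j)) * (1 + ∑ i, (leaveOneOutDist x i ^ 2)⁻¹) := by
  choose c hc hcnorm using fun i => exists_forall_inner_eq_ite (hx i)
  simp_rw [← hcnorm]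
  rw [← lintegral_sum_mul_one_add_sum_enorm_inner_sq]
  refine lintegral_mono fun y => ?_
  refine (ofReal_trace_sub_nystrom_diagonal_le hd p
    (fun i => if h : p i then x ⟨i, h⟩ else y ⟨i, h⟩) c fun i j => ?_).trans_eq ?_
  · simp [i.2, hc]
  · refine Finset.sum_congr rfl fun j _ => ?_
    simp only [dif_neg j.2]

lemma lintegral_ofReal_trace_sub_nystrom_diagonal_le {d : Fin n → ℝ} (hd : ∀ i, 0 ≤ d i)
    (p : Fin n → Prop) [DecidablePred p] (hp : Fintype.card {i // p i} + 1 < k) :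
    ∫⁻ ω, ENNReal.ofReal (diagonal d - nystrom (diagonal d) (Matrix.of ω)).trace
        ∂gaussianEnsemble n k ≤
      (∑ j : {j // ¬ p j}, ENNReal.ofReal (d j)) * (1 + Fintype.card {i // p i} *
        ENNReal.ofReal (1 / (k - Fintype.card {i // p i} - 1))) := by
  have hfin : Fintype.card {i // p i} + 1 < Module.finrank ℝ (EuclideanSpace ℝ (Fin k)) := by
    rwa [finrank_euclideanSpace_fin]
  rw [← (measurePreserving_ofLp_stdGaussian_gaussianEnsemble n k).map_eq]
  refine (lintegral_map_le _ _).trans ?_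
  refine (lintegral_pi_le_lintegral_lintegral_subtype _ p _).trans ?_
  calc _ ≤ ∫⁻ x, (∑ j : {j // ¬ p j}, ENNReal.ofReal (d j)) *
          (1 + ∑ i, (leaveOneOutDist x i ^ 2)⁻¹)
          ∂(Measure.pi fun _ : {i // p i} => stdGaussian (EuclideanSpace ℝ (Fin k))) := by
        refine lintegral_mono_ae ?_
        filter_upwards [ae_forall_leaveOneOutDist_ne_zero hfin] with x hx
        exact lintegral_ofReal_trace_sub_nystrom_diagonal_le_of_rows hd p hx
    _ = (∑ j : {j // ¬ p j}, ENNReal.ofReal (d j)) * (1 + ∑ i,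
          ∫⁻ x, (leaveOneOutDist x i ^ 2)⁻¹
            ∂(Measure.pi fun _ : {i // p i} => stdGaussian (EuclideanSpace ℝ (Fin k)))) := by
        have hmeas (i : {i // p i}) : Measurable
            fun x : {i // p i} → EuclideanSpace ℝ (Fin k) => (leaveOneOutDist x i ^ 2)⁻¹ :=
          ((measurable_leaveOneOutDist i).pow_const 2).inv
        rw [lintegral_const_mul _ (by fun_prop), lintegral_add_left measurable_const,
          lintegral_finsetSum _ fun i _ => hmeas i, lintegral_one, measure_univ]
    _ ≤ _ := by
        gcongr
        refine (Finset.sum_le_card_nsmul _ _ _ fun i _ =>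
          lintegral_inv_leaveOneOutDist_sq_le hfin i).trans_eq ?_
        rw [Finset.card_univ, nsmul_eq_mul, finrank_euclideanSpace_fin]

lemma lintegral_norm_sub_nystrom_le {A : Matrix (Fin n) (Fin n) ℝ} (hA : A.PosSemidef) {ϱ : ℕ}
    (hϱ : ϱ + 1 < k) :
    ∫⁻ ω, ENNReal.ofReal ‖A - nystrom A (Matrix.of ω)‖ ∂gaussianEnsemble n k ≤
      ENNReal.ofReal ((1 + ϱ / (k - ϱ - 1)) * tailNorm 1 A ϱ) := by
  obtain ⟨V, hV, hAV⟩ := exists_unitary_eq_of_posSemidef hA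
  have hVV : Vᴴ * V = 1 := mem_unitaryGroup_iff'.mp hV
  set D := diagonal fun j : Fin n => sval A j
  have hcard : Fintype.card {j : Fin n // (j : ℕ) < ϱ} ≤ ϱ := by
    simpa [Fintype.card_subtype] using card_filter_val_mem_le (n := n) (Finset.range ϱ)
  have hgap := natCast_sub_natCast_sub_one_pos hϱ
  have htail : ∑ j : {j : Fin n // ¬ (j : ℕ) < ϱ}, ENNReal.ofReal (sval A j) =
      ENNReal.ofReal (tailNorm 1 A ϱ) := by
    rw [tailNorm_one_eq_sum_subtype, ENNReal.ofReal_sum_of_nonneg]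
    exact fun j _ => sval_nonneg A j
  have hpoint (ω : Fin n → Fin k → ℝ) :
      ‖A - nystrom A (V * Matrix.of ω)‖ ≤ (D - nystrom D (Matrix.of ω)).trace := by
    refine (norm_le_re_trace_of_posSemidef (posSemidef_sub_nystrom hA _)).trans_eq ?_
    have hconj : A - nystrom A (V * Matrix.of ω) = V * (D - nystrom D (Matrix.of ω)) * Vᴴ := by
      rw [hAV, nystrom_conj hVV, Matrix.mul_sub, Matrix.sub_mul]
      rfl
    rw [hconj, trace_mul_comm, ← Matrix.mul_assoc, hVV, Matrix.one_mul]
    rfl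
  calc _ ≤ ∫⁻ ω, ENNReal.ofReal ‖A - nystrom A (V * Matrix.of ω)‖ ∂gaussianEnsemble n k := by
        conv_lhs => rw [← (measurePreserving_mul_gaussianEnsemble hV).map_eq]
        exact lintegral_map_le _ _
    _ ≤ _ := lintegral_mono fun ω => ENNReal.ofReal_le_ofReal (hpoint ω)
    _ ≤ _ := lintegral_ofReal_trace_sub_nystrom_diagonal_le (fun j => sval_nonneg A j)
      (fun j : Fin n => (j : ℕ) < ϱ) (by omega)
    _ ≤ (∑ j : {j : Fin n // ¬ (j : ℕ) < ϱ}, ENNReal.ofReal (sval A j)) *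
          (1 + ϱ * ENNReal.ofReal (1 / (k - ϱ - 1))) := by gcongr
    _ = _ := by
      rw [htail, ← ENNReal.ofReal_natCast, ← ENNReal.ofReal_mul (by positivity),
        ← ENNReal.ofReal_one, ← ENNReal.ofReal_add zero_le_one (by positivity), mul_one_div,
        ← ENNReal.ofReal_mul' (by positivity), mul_comm]

lemma integral_le_of_lintegral_ofReal_le {α : Type*} [MeasurableSpace α] {μ : Measure α}
    {f : α → ℝ} {b : ℝ} (hb : 0 ≤ b) (h : ∫⁻ a, ENNReal.ofReal (f a) ∂μ ≤ ENNReal.ofReal b) :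
    ∫ a, f a ∂μ ≤ b := by
  by_cases hf : Integrable f μ
  · rw [integral_eq_lintegral_pos_part_sub_lintegral_neg_part hf]
    exact (sub_le_self _ ENNReal.toReal_nonneg).trans (ENNReal.toReal_le_of_le_ofReal hb h)
  · rwa [integral_undef hf]

lemma two_mul_one_add_div_mul_schatten_nonneg (p : ℝ≥0∞) (M : Matrix (Fin n) (Fin n) 𝕜) {a b : ℕ}
    (h : a + 1 < b) : 0 ≤ 2 * ((1 + (a : ℝ) / ((b : ℝ) - a - 1)) * schatten p M) := by
  have := natCast_sub_natCast_sub_one_pos h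
  have := schatten_nonneg p M
  positivity

-- `truncate` is an arbitrary choice among best approximations, so the error need not be measurable
-- in `ω`, and the Bochner integral of a nonmeasurable function is `0`; the upper integral `∫⁻` is
-- meaningful in every case.
theorem stmt4_general (A : Matrix (Fin n) (Fin n) ℝ) (hA : A.PosSemidef) {ϱ : ℕ}
    (hϱ : ϱ + 1 < k) (r : ℕ) :
    ∫⁻ ω, ENNReal.ofReal (schatten ⊤ (A - truncate (nystrom A (Matrix.of ω)) r))
        ∂gaussianEnsemble n k ≤
      ENNReal.ofReal (schatten ⊤ (A - truncate A r)
        + 2 * ((1 + (ϱ : ℝ) / ((k : ℝ) - ϱ - 1)) * schatten 1 (A - truncate A ϱ))) := by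
  have hgap := natCast_sub_natCast_sub_one_pos hϱ
  have htail : tailNorm 1 A ϱ ≤ schatten 1 (A - truncate A ϱ) :=
    tailNorm_le_schatten_sub_of_rank_le 1 A (isBestRankApprox_truncate A ϱ).1
  simp_rw [schatten_top]
  calc _ ≤ ∫⁻ ω, (ENNReal.ofReal ‖A - truncate A r‖ +
          2 * ENNReal.ofReal ‖A - nystrom A (Matrix.of ω)‖) ∂gaussianEnsemble n k := by
        refine lintegral_mono fun ω => ?_
        rw [← ENNReal.ofReal_ofNat 2, ← ENNReal.ofReal_mul zero_le_two,
          ← ENNReal.ofReal_add (by positivity) (by positivity)]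
        exact ENNReal.ofReal_le_ofReal (norm_sub_truncate_le_norm_sub_truncate_add A _ r)
    _ = ENNReal.ofReal ‖A - truncate A r‖ +
          2 * ∫⁻ ω, ENNReal.ofReal ‖A - nystrom A (Matrix.of ω)‖ ∂gaussianEnsemble n k := by
        rw [lintegral_add_left measurable_const, lintegral_const_mul' _ _ (by simp),
          lintegral_const, measure_univ, mul_one]
    _ ≤ ENNReal.ofReal ‖A - truncate A r‖ +
          2 * ENNReal.ofReal ((1 + ϱ / (k - ϱ - 1)) * schatten 1 (A - truncate A ϱ)) := by
        gcongr
        refine (lintegral_norm_sub_nystrom_le hA hϱ).trans ?_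
        gcongr
    _ = _ := by
        rw [ENNReal.ofReal_add (norm_nonneg _)
          (two_mul_one_add_div_mul_schatten_nonneg 1 _ hϱ), ENNReal.ofReal_mul zero_le_two,
          ENNReal.ofReal_ofNat]

end ExpectedError

theorem stmt4 {n k r : ℕ} (A : Matrix (Fin n) (Fin n) ℝ) (hA : A.PosSemidef)
    (hr : 1 ≤ r) (hrk : r < k) (hkn : k ≤ n) :
    ∀ ϱ : ℕ, ϱ + 1 < k →
      (∫ ω, schatten ⊤ (A - truncate (nystrom A (Matrix.of ω)) r) ∂ gaussianEnsemble n k)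
        ≤ schatten ⊤ (A - truncate A r)
          + 2 * ((1 + (ϱ : ℝ) / ((k : ℝ) - ϱ - 1)) * schatten 1 (A - truncate A ϱ)) := by
  intro ϱ hϱ
  exact integral_le_of_lintegral_ofReal_le (add_nonneg (schatten_nonneg _ _)
    (two_mul_one_add_div_mul_schatten_nonneg 1 _ hϱ)) (stmt4_general A hA hϱ r)

end PsdSketch
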